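/- Let W be a polynomial in N variables with rational coefficients and Γ a finite connected graph with half-edges h_1,…,h_N and legs with integer weights a_i. Then the sum Σ_w W(w(h_1),…,w(h_N)), taken over all functions w : halfedges → {0,…,r−1} satisfying conditions (R1)–(R3) modulo r, is a polynomial in r for all sufficiently large r, and this polynomial is divisible by r^{h^1(Γ)}. -/

import Mathlib

namespace Pix

noncomputable section

open scoped Classical

/-- representative of `z` in `[c, c+r)` -/
def rep (r : ℕ) (c : ℤ) (z : ZMod r) : ℤ := c + ((z - (c : ZMod r)).val : ℤ)

lemma rep_add (r : ℕ) (c k : ℤ) (z : ZMod r) : rep r c (z + (k : ZMod r)) = rep r (c - k) z + k := by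
  unfold rep
  have : z + (k : ZMod r) - (c : ZMod r) = z - ((c - k : ℤ) : ZMod r) := by push_cast; ring
  rw [this]; ring

lemma rep_cast (r : ℕ) [NeZero r] (c : ℤ) (z : ZMod r) : ((rep r c z : ℤ) : ZMod r) = z := by
  unfold rep; push_cast; rw [ZMod.natCast_zmod_val]; ring

lemma rep_le (r : ℕ) [NeZero r] (c : ℤ) (z : ZMod r) : c ≤ rep r c z := by
  unfold rep; omega

lemma rep_lt (r : ℕ) [NeZero r] (c : ℤ) (z : ZMod r) : rep r c z < c + r := by
  unfold rep; have := ZMod.val_lt (z - (c : ZMod r)); omega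

lemma rep_unique (r : ℕ) [NeZero r] (c m : ℤ) (z : ZMod r) (h1 : c ≤ m) (h2 : m < c + r)
    (h : (m : ZMod r) = z) : rep r c z = m := by
  subst h
  unfold rep
  obtain ⟨t, ht⟩ := Int.eq_ofNat_of_zero_le (sub_nonneg.2 h1)
  have : (m : ZMod r) - (c : ZMod r) = (t : ZMod r) := by
    rw [← Int.cast_sub, ht]; simp
  rw [this, ZMod.val_natCast_of_lt (by omega)]; omega

lemma rep_jump (r : ℕ) [NeZero r] (c e : ℤ) (he : e = 1 ∨ e = -1 ∨ e = 0) (z : ZMod r)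
    (hz : e ≠ 0 → z ≠ ((if e = 1 then c - 1 else c : ℤ) : ZMod r)) :
    rep r c (z + (e : ZMod r)) = rep r c z + e := by
  have h1 := rep_le r c z
  have h2 := rep_lt r c z
  have h3 := rep_cast r c z
  rcases he with rfl | rfl | rfl
  · apply rep_unique
    · omega
    · by_contra hh
      have : rep r c z = c - 1 + r := by omega
      apply hz (by simp)
      rw [← h3, this]; simp
    · push_cast; rw [h3]
  · apply rep_unique
    · by_contra hh
      have : rep r c z = c := by omega
      apply hz (by simp)
      conv_lhs => rw [← h3, this]
      simp
    · omega
    · push_cast; rw [h3]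
  · simp

lemma rep_at_top (r : ℕ) [NeZero r] (c : ℤ) : rep r c ((c - 1 : ℤ) : ZMod r) = c - 1 + r := by
  have := NeZero.pos r
  apply rep_unique
  · omega
  · omega
  · simp

lemma rep_at (r : ℕ) [NeZero r] (c : ℤ) : rep r c (c : ZMod r) = c := by
  have := NeZero.pos r
  apply rep_unique
  · omega
  · omega
  · simp

lemma rep_zero (r : ℕ) [NeZero r] (c : ℤ) (h : c.natAbs < r) :
    rep r c 0 = if c ≤ 0 then 0 else (r : ℤ) := by
  split_ifs
  · apply rep_unique <;> first | omega | simp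
  · apply rep_unique <;> first | omega | simp

variable {V E : Type} [Fintype V] [Fintype E]

/-- boundary -/
def bd {A : Type} [CommRing A] (ends : E → V × V) (x : E → A) (v : V) : A :=
  ∑ e, ((if (ends e).1 = v then x e else 0) - (if (ends e).2 = v then x e else 0))

omit [Fintype V] in
lemma bd_add {A : Type} [CommRing A] (ends : E → V × V) (x y : E → A) (v : V) :
    bd ends (fun e => x e + y e) v = bd ends x v + bd ends y v := by
  unfold bd
  rw [← Finset.sum_add_distrib]
  refine Finset.sum_congr rfl fun e _ => ?_
  split_ifs <;> ring

omit [Fintype V] in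
lemma bd_smul {A : Type} [CommRing A] (ends : E → V × V) (t : A) (y : E → A) (v : V) :
    bd ends (fun e => t * y e) v = t * bd ends y v := by
  unfold bd
  rw [Finset.mul_sum]
  refine Finset.sum_congr rfl fun e _ => ?_
  split_ifs <;> ring

omit [Fintype V] in
lemma bd_cast {A : Type} [CommRing A] (ends : E → V × V) (y : E → ℤ) (v : V) :
    bd ends (fun e => (y e : A)) v = ((bd ends y v : ℤ) : A) := by
  unfold bd
  push_cast
  refine Finset.sum_congr rfl fun e _ => ?_
  split_ifs <;> simp

omit [Fintype V] in
lemma bd_single {A : Type} [CommRing A] (ends : E → V × V) (e0 : E) (t : A) (v : V) :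
    bd ends (fun e => if e = e0 then t else 0) v =
      (if (ends e0).1 = v then t else 0) - (if (ends e0).2 = v then t else 0) := by
  unfold bd
  rw [Finset.sum_eq_single e0]
  · simp
  · intro b _ hb; simp [hb]
  · simp

omit [Fintype V] in
lemma sum_bd_mul {A : Type} [CommRing A] [Fintype V] (ends : E → V × V) (x : E → A) (f : V → A) :
    ∑ v, f v * bd ends x v = ∑ e, (f (ends e).1 - f (ends e).2) * x e := by
  unfold bd
  simp_rw [Finset.mul_sum]
  rw [Finset.sum_comm]
  refine Finset.sum_congr rfl fun e _ => ?_
  simp_rw [mul_sub, Finset.sum_sub_distrib, sub_mul]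
  simp

/-- simple graph of an edge set -/
def gr (ends : E → V × V) (S : Set E) : SimpleGraph V :=
  SimpleGraph.fromRel (fun u v => ∃ e, e ∈ S ∧ ends e = (u, v))

omit [Fintype V] in
lemma path_chain (ends : E → V × V) (S : Set E) {u v : V} (p : (gr ends S).Walk u v)
    (hp : p.IsPath) :
    ∃ z : E → ℤ, (∀ e, z e = 1 ∨ z e = -1 ∨ z e = 0) ∧
      (∀ e, z e ≠ 0 → e ∈ S ∧ (ends e).1 ∈ p.support ∧ (ends e).2 ∈ p.support) ∧
      ∀ x, bd ends z x = (if u = x then 1 else 0) - (if v = x then 1 else 0) := by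
  induction p with
  | nil => exact ⟨fun _ => 0, by simp, by simp, by simp [bd]⟩
  | @cons u w v h p ih =>
    rw [SimpleGraph.Walk.cons_isPath_iff] at hp
    obtain ⟨z, h1, h2, h3⟩ := ih hp.1
    have hw : w ∈ p.support := p.start_mem_support
    have hadj := h
    simp only [gr, SimpleGraph.fromRel_adj] at hadj
    obtain ⟨hne, ⟨e, heS, he⟩ | ⟨e, heS, he⟩⟩ := hadj
    · have hz : z e = 0 := by
        by_contra hh
        have := (h2 e hh).2.1
        rw [he] at this
        exact hp.2 this
      refine ⟨fun e' => z e' + (if e' = e then 1 else 0), ?_, ?_, ?_⟩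
      · intro e'; by_cases h' : e' = e
        · subst h'; simp [hz]
        · simpa [h'] using h1 e'
      · intro e' h'
        by_cases hh : e' = e
        · subst hh; simp [he, hw, heS]
        · simp only [hh, if_false, add_zero] at h'
          have := h2 e' h'
          simp [this]
      · intro x
        rw [bd_add, bd_single, h3, he]; ring
    · have hz : z e = 0 := by
        by_contra hh
        have := (h2 e hh).2.2
        rw [he] at this
        exact hp.2 this
      refine ⟨fun e' => z e' + (if e' = e then -1 else 0), ?_, ?_, ?_⟩
      · intro e'; by_cases h' : e' = e
        · subst h'; simp [hz]
        · simpa [h'] using h1 e'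
      · intro e' h'
        by_cases hh : e' = e
        · subst hh; simp [he, hw, heS]
        · simp only [hh, if_false, add_zero] at h'
          have := h2 e' h'
          simp [this]
      · intro x
        rw [bd_add, bd_single, h3, he]
        split_ifs <;> simp

omit [Fintype V] in
lemma reach_chain (ends : E → V × V) (S : Set E) {u v : V} (h : (gr ends S).Reachable u v) :
    ∃ z : E → ℤ, (∀ e, z e = 1 ∨ z e = -1 ∨ z e = 0) ∧
      (∀ e, z e ≠ 0 → e ∈ S) ∧
      ∀ x, bd ends z x = (if u = x then 1 else 0) - (if v = x then 1 else 0) := by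
  obtain ⟨p⟩ := h
  obtain ⟨z, h1, h2, h3⟩ := path_chain ends S p.toPath.1 p.toPath.2
  exact ⟨z, h1, fun e he => (h2 e he).1, h3⟩

/-- a unit cycle supported in `S` -/
def HasCyc (ends : E → V × V) (S : Finset E) : Prop :=
  ∃ z : E → ℤ, (∀ e, z e = 1 ∨ z e = -1 ∨ z e = 0) ∧ (∀ e, z e ≠ 0 → e ∈ S) ∧
    (∀ x, bd ends z x = 0) ∧ ∃ i, z i = 1

lemma forest_zero (ends : E → V × V) (S : Finset E) (hS : ¬ HasCyc ends S)
    {A : Type} [CommRing A] (x : E → A) (hx : ∀ v, bd ends x v = 0) (hxS : ∀ e, e ∉ S → x e = 0) :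
    ∀ e, x e = 0 := by
  induction S using Finset.induction_on with
  | empty => intro e; exact hxS e (by simp)
  | insert e S heS ih =>
    have hS' : ¬ HasCyc ends S := by
      rintro ⟨z, h1, h2, h3⟩
      exact hS ⟨z, h1, fun e he => Finset.mem_insert_of_mem (h2 e he), h3⟩
    have hnr : ¬ (gr ends (S : Set E)).Reachable (ends e).2 (ends e).1 := by
      intro hr
      obtain ⟨z, h1, h2, h3⟩ := reach_chain ends _ hr
      have hz : z e = 0 := by
        by_contra hh; exact heS (by simpa using h2 e hh)
      apply hS
      refine ⟨fun e' => z e' + (if e' = e then 1 else 0), ?_, ?_, ?_, e, by simp [hz]⟩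
      · intro e'; by_cases h' : e' = e
        · subst h'; simp [hz]
        · simpa [h'] using h1 e'
      · intro e' h'
        by_cases hh : e' = e
        · subst hh; simp
        · simp only [hh, if_false, add_zero] at h'
          exact Finset.mem_insert_of_mem (by simpa using h2 e' h')
      · intro x
        rw [bd_add, bd_single, h3]; ring
    apply ih hS'
    intro e' he'
    by_cases hee : e' = e
    · subst hee
      have key := sum_bd_mul ends x
        (fun v => if (gr ends (S : Set E)).Reachable (ends e').2 v then (1 : A) else 0)
      simp only [hx, mul_zero, Finset.sum_const_zero] at key
      rw [Finset.sum_eq_single e'] at key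
      · simpa [hnr] using key
      · intro b _ hb
        by_cases hbS : b ∈ S
        · have : (gr ends (S : Set E)).Reachable (ends e').2 (ends b).1 ↔
              (gr ends (S : Set E)).Reachable (ends e').2 (ends b).2 := by
            have hr : (gr ends (S : Set E)).Reachable (ends b).1 (ends b).2 := by
              by_cases heq : (ends b).1 = (ends b).2
              · rw [heq]
              · apply SimpleGraph.Adj.reachable
                simp only [gr, SimpleGraph.fromRel_adj]
                exact ⟨heq, Or.inl ⟨b, by simpa using hbS, rfl⟩⟩
            exact ⟨fun h => h.trans hr, fun h => h.trans hr.symm⟩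
          simp [this]
        · rw [hxS b (by simp [hb, hbS])]; simp
      · simp
    · exact hxS e' (by simp [hee, he'])

lemma forest_card [Nonempty V] (ends : E → V × V) (S : Finset E) (hS : ¬ HasCyc ends S) :
    S.card + 1 ≤ Fintype.card V := by
  obtain ⟨v0⟩ := ‹Nonempty V›
  let ext : (Option S → ℚ) → E → ℚ := fun y e => if h : e ∈ S then y (some ⟨e, h⟩) else 0
  have hext_add : ∀ y y', ext (y + y') = fun e => ext y e + ext y' e := by
    intro y y'; ext e; simp only [ext]; split_ifs <;> simp
  have hext_smul : ∀ (t : ℚ) y, ext (t • y) = fun e => t * ext y e := by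
    intro y y'; ext e; simp only [ext]; split_ifs <;> simp
  let f : (Option S → ℚ) →ₗ[ℚ] (V → ℚ) :=
    { toFun := fun y v => bd ends (ext y) v + (if v = v0 then y none else 0)
      map_add' := by
        intro y y'; ext v; simp only [hext_add, bd_add, Pi.add_apply]; split_ifs <;> ring
      map_smul' := by
        intro t y; ext v
        simp only [hext_smul, bd_smul, Pi.smul_apply, smul_eq_mul, RingHom.id_apply]
        split_ifs <;> ring }
  have hf : Function.Injective f := by
    rw [injective_iff_map_eq_zero]
    intro y hy
    have hy' : ∀ v, bd ends (ext y) v + (if v = v0 then y none else 0) = 0 := fun v => congrFun hy v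
    have h0 : y none = 0 := by
      have h1 : ∑ v, (bd ends (ext y) v + (if v = v0 then y none else 0)) = 0 :=
        Finset.sum_eq_zero fun v _ => hy' v
      have h2 := sum_bd_mul ends (ext y) (fun _ => 1)
      simp only [one_mul, sub_self, zero_mul, Finset.sum_const_zero] at h2
      rw [Finset.sum_add_distrib, h2] at h1
      simpa using h1
    have h3 := forest_zero ends S hS (ext y) (fun v => by simpa [h0] using hy' v)
      (fun e he => by simp [ext, he])
    ext o
    cases o with
    | none => exact h0
    | some e => have := h3 e.1; simpa [ext] using this
  have := LinearMap.finrank_le_finrank_of_injective hf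
  simpa using this

/-- evaluation point -/
def vv (r : ℕ) (u : E → ℚ) : Option E → ℚ := fun o => o.elim (r : ℚ) u

/-- the weighted sum over circulations supported on `S` -/
def F (ends : E → V × V) (r : ℕ) [NeZero r] (S : Finset E) (c : E → ℤ)
    (P : MvPolynomial (Option E) ℚ) : ℚ :=
  ∑ x : E → ZMod r, if (∀ v, bd ends x v = 0) ∧ (∀ e, e ∉ S → x e = 0) then
    MvPolynomial.eval (vv r (fun e => ((rep r (c e) (x e) : ℤ) : ℚ))) P else 0

/-- shift -/
def sh (z : E → ℤ) : MvPolynomial (Option E) ℚ →ₐ[ℚ] MvPolynomial (Option E) ℚ :=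
  MvPolynomial.aeval (fun o => o.elim (MvPolynomial.X none)
    (fun e => MvPolynomial.X (some e) + MvPolynomial.C (z e : ℚ)))

omit [Fintype E] in
lemma exists_antidiff (z : E → ℤ) (i : E) (hi : z i = 1) (P : MvPolynomial (Option E) ℚ) :
    ∃ Q, sh z Q - Q = P := by
  suffices h : ∀ n : ℕ, ∃ Q, sh z Q - Q = P * (MvPolynomial.X (some i)) ^ n by
    simpa using h 0
  induction P using MvPolynomial.induction_on with
  | C a =>
    intro n
    have hb : ((Polynomial.bernoulli (n + 1)).comp (1 + Polynomial.X))
        = Polynomial.bernoulli (n + 1) + (n + 1 : ℚ) • Polynomial.X ^ n := by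
      apply Polynomial.funext
      intro x
      have := Polynomial.bernoulli_eval_one_add (n + 1) x
      simp only [Polynomial.eval_comp, Polynomial.eval_add, Polynomial.eval_one,
        Polynomial.eval_X, Polynomial.eval_smul, Polynomial.eval_pow, smul_eq_mul]
      rw [this]; simp
    refine ⟨MvPolynomial.C (a / (n + 1)) *
      Polynomial.aeval (MvPolynomial.X (some i)) (Polynomial.bernoulli (n + 1)), ?_⟩
    have h1 : sh z (Polynomial.aeval (MvPolynomial.X (some i)) (Polynomial.bernoulli (n + 1)))
        = Polynomial.aeval (MvPolynomial.X (some i)) (Polynomial.bernoulli (n + 1))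
          + MvPolynomial.C (n + 1 : ℚ) * (MvPolynomial.X (some i)) ^ n := by
      have h2 := congrArg (Polynomial.aeval (MvPolynomial.X (some i) :
        MvPolynomial (Option E) ℚ)) hb
      rw [Polynomial.aeval_comp] at h2
      rw [← Polynomial.aeval_algHom_apply]
      have h3 : sh z (MvPolynomial.X (some i) : MvPolynomial (Option E) ℚ) =
          Polynomial.aeval (MvPolynomial.X (some i) : MvPolynomial (Option E) ℚ)
            (1 + Polynomial.X : Polynomial ℚ) := by
        simp [sh, hi, add_comm]
      rw [h3, h2]
      simp [MvPolynomial.smul_eq_C_mul]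
    have h4 : sh z (MvPolynomial.C (a / (n + 1))) = MvPolynomial.C (a / (n + 1)) := by
      simp [sh]
    rw [map_mul, h1, h4, mul_add, add_sub_cancel_left, ← mul_assoc, ← MvPolynomial.C_mul]
    congr 2
    field_simp
  | add p q hp hq =>
    intro n
    obtain ⟨Q, hQ⟩ := hp n
    obtain ⟨Q', hQ'⟩ := hq n
    exact ⟨Q + Q', by rw [map_add, add_mul, ← hQ, ← hQ']; ring⟩
  | mul_X p o hp =>
    intro n
    cases o with
    | none =>
      obtain ⟨Q, hQ⟩ := hp n
      refine ⟨Q * MvPolynomial.X none, ?_⟩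
      have : sh z (MvPolynomial.X none) = MvPolynomial.X none := by simp [sh]
      rw [map_mul, this, mul_right_comm, ← hQ]; ring
    | some j =>
      obtain ⟨Q, hQ⟩ := hp n
      obtain ⟨Q', hQ'⟩ := hp (n + 1)
      let Y : MvPolynomial (Option E) ℚ :=
        MvPolynomial.X (some j) - MvPolynomial.C (z j : ℚ) * MvPolynomial.X (some i)
      have hY : sh z Y = Y := by
        have : sh z (MvPolynomial.C (z j : ℚ)) = MvPolynomial.C (z j : ℚ) := by
          simp [sh]
        simp only [Y, map_sub, map_mul, this]
        simp [sh, hi]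
        ring
      refine ⟨Q * Y + MvPolynomial.C (z j : ℚ) * Q', ?_⟩
      have : sh z (MvPolynomial.C (z j : ℚ)) = MvPolynomial.C (z j : ℚ) := by
        simp [sh]
      rw [map_add, map_mul, map_mul, hY, this]
      calc _ = (sh z Q - Q) * Y + MvPolynomial.C (z j : ℚ) * (sh z Q' - Q') := by ring
        _ = _ := by rw [hQ, hQ']; simp only [Y]; ring

/-- hybrid telescoping -/
lemma telescope {n : ℕ} (en : E ≃ Fin n) (Φ : (E → ℚ) → ℚ) (f g : E → ℚ) :
    Φ f - Φ g = ∑ i, (Φ (fun j => if en j < en i then g j else f j)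
      - Φ (fun j => if en j ≤ en i then g j else f j)) := by
  let H : ℕ → ℚ := fun m => Φ (fun j => if (en j : ℕ) < m then g j else f j)
  have h1 : ∑ i, (Φ (fun j => if en j < en i then g j else f j)
      - Φ (fun j => if en j ≤ en i then g j else f j)) = ∑ i : Fin n, (H i - H (i + 1)) := by
    rw [← Equiv.sum_comp en]
    refine Finset.sum_congr rfl fun i _ => ?_
    simp only [H, Fin.lt_def, Fin.le_def, Nat.lt_succ_iff]
  rw [h1, Fin.sum_univ_eq_sum_range (fun m => H m - H (m + 1)), Finset.sum_range_sub']
  simp [H]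

/-- substitution used in the deletion step -/
def sb (z : E → ℤ) (i : E) (k al : ℤ) (b : MvPolynomial (Option E) ℚ) :
    MvPolynomial (Option E) ℚ →ₐ[ℚ] MvPolynomial (Option E) ℚ :=
  MvPolynomial.aeval (fun o => o.elim (MvPolynomial.X none)
    (fun j => if j = i then MvPolynomial.C (al : ℚ) + b
      else MvPolynomial.X (some j) + MvPolynomial.C (((k + 1) * z j : ℤ) : ℚ)))

omit [Fintype E] in
lemma sb_dvd (z : E → ℤ) (i : E) (k al : ℤ) (Q : MvPolynomial (Option E) ℚ) :
    MvPolynomial.X none ∣ sb z i k al (MvPolynomial.X none) Q - sb z i k al 0 Q := by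
  induction Q using MvPolynomial.induction_on with
  | C a => simp [sb]
  | add p q hp hq =>
    have := dvd_add hp hq
    rw [map_add, map_add]
    convert this using 1; ring
  | mul_X p o hp =>
    have h : MvPolynomial.X none ∣ sb z i k al (MvPolynomial.X none) (MvPolynomial.X o)
        - sb z i k al 0 (MvPolynomial.X o) := by
      cases o with
      | none => simp [sb]
      | some j => by_cases hj : j = i <;> simp [sb, hj]
    rw [map_mul, map_mul]
    have := dvd_add (hp.mul_right (sb z i k al (MvPolynomial.X none) (MvPolynomial.X o)))
      (h.mul_left (sb z i k al 0 p))
    convert this using 1; ring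

omit [Fintype E] in
lemma eval_sb (z : E → ℤ) (i : E) (k al : ℤ) (b : MvPolynomial (Option E) ℚ)
    (Q : MvPolynomial (Option E) ℚ) (r : ℕ) (u : E → ℚ) :
    MvPolynomial.eval (vv r u) (sb z i k al b Q) =
      MvPolynomial.eval (vv r (fun j => if j = i then (al : ℚ) + MvPolynomial.eval (vv r u) b
        else u j + (((k + 1) * z j : ℤ) : ℚ))) Q := by
  unfold sb
  induction Q using MvPolynomial.induction_on with
  | C a => simp
  | add p q hp hq => rw [map_add, map_add, map_add, hp, hq]
  | mul_X p o hp =>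
    rw [map_mul, map_mul, map_mul, hp]
    cases o with
    | none => simp [vv]
    | some j => by_cases hj : j = i <;> simp [vv, hj]

omit [Fintype E] in
lemma eval_sh (z : E → ℤ) (Q : MvPolynomial (Option E) ℚ) (r : ℕ) (u : E → ℚ) :
    MvPolynomial.eval (vv r u) (sh z Q) =
      MvPolynomial.eval (vv r (fun j => u j + (z j : ℚ))) Q := by
  unfold sh
  induction Q using MvPolynomial.induction_on with
  | C a => simp
  | add p q hp hq => rw [map_add, map_add, map_add, hp, hq]
  | mul_X p o hp =>
    rw [map_mul, map_mul, map_mul, hp]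
    cases o <;> simp [vv]

/-- value at which edge `i` jumps -/
def kap (z c : E → ℤ) (i : E) : ℤ := if z i = 1 then c i - 1 else c i
/-- number of cycle shifts -/
def kk (z c : E → ℤ) (i : E) : ℤ := z i * kap z c i
/-- base value of the jump -/
def alp (z c : E → ℤ) (i : E) : ℤ := if z i = 1 then c i else c i - 1
/-- new cuts -/
def cc {n : ℕ} (en : E ≃ Fin n) (z c : E → ℤ) (i j : E) : ℤ :=
  c j - (kk z c i + (if en j < en i then 1 else 0)) * z j

set_option maxHeartbeats 400000 in
lemma step (ends : E → V × V) {n : ℕ} (en : E ≃ Fin n) (r : ℕ) [NeZero r] (S : Finset E)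
    (c : E → ℤ) (z : E → ℤ)
    (h1 : ∀ e, z e = 1 ∨ z e = -1 ∨ z e = 0) (h2 : ∀ e, z e ≠ 0 → e ∈ S)
    (h3 : ∀ x, bd ends z x = 0) (P Q : MvPolynomial (Option E) ℚ) (hQ : sh z Q - Q = P)
    (P' : E → MvPolynomial (Option E) ℚ)
    (hP' : ∀ i, sb z i (kk z c i) (alp z c i) (MvPolynomial.X none) Q
      - sb z i (kk z c i) (alp z c i) 0 Q = MvPolynomial.X none * P' i) :
    F ends r S c P = ∑ i, if z i = 0 then 0 else
      (z i : ℚ) * r * F ends r (S.erase i) (cc en z c i) (P' i) := by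
  let K : (E → ZMod r) → Prop := fun x => (∀ v, bd ends x v = 0) ∧ (∀ e, e ∉ S → x e = 0)
  let u : (E → ZMod r) → E → ℚ := fun x e => ((rep r (c e) (x e) : ℤ) : ℚ)
  let ev : (E → ℚ) → ℚ := fun y => MvPolynomial.eval (vv r y) Q
  let zr : E → ZMod r := fun e => (z e : ZMod r)
  have hKadd : ∀ (t : ZMod r) x, K (fun e => x e + t * zr e) ↔ K x := by
    intro t x
    have hb : ∀ v, bd ends (fun e => x e + t * zr e) v = bd ends x v := by
      intro v
      rw [bd_add, bd_smul, bd_cast, h3]; simp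
    have hs : ∀ e, e ∉ S → x e + t * zr e = x e := by
      intro e he
      have : z e = 0 := by by_contra hh; exact he (h2 e hh)
      simp [zr, this]
    simp only [K, hb]
    refine and_congr_right fun _ => ?_
    exact forall_congr' fun e => ⟨fun h he => by rw [← hs e he]; exact h he,
      fun h he => by rw [hs e he]; exact h he⟩
  have hshift : ∀ (t : ZMod r) (f : (E → ZMod r) → ℚ),
      ∑ x : E → ZMod r, f (fun e => x e + t * zr e) = ∑ x, f x := by
    intro t f
    exact Equiv.sum_comp (Equiv.addRight (fun e => t * zr e)) f
  have e1 : F ends r S c P = ∑ x, if K x then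
      (ev (fun j => u x j + (z j : ℚ)) - ev (u (fun e => x e + 1 * zr e))) else 0 := by
    have : F ends r S c P = (∑ x, if K x then ev (fun j => u x j + (z j : ℚ)) else 0)
        - ∑ x, if K x then ev (u x) else 0 := by
      rw [← Finset.sum_sub_distrib]
      unfold F
      refine Finset.sum_congr rfl fun x _ => ?_
      change (if K x then _ else _) = _
      split_ifs
      · rw [← hQ, map_sub, eval_sh]
      · simp
    rw [this, ← hshift 1 (fun x => if K x then ev (u x) else 0), ← Finset.sum_sub_distrib]
    refine Finset.sum_congr rfl fun x _ => ?_
    simp only [hKadd]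
    split_ifs <;> simp
  rw [e1]
  have e2 : ∀ (x : E → ZMod r), (if K x then
      (ev (fun j => u x j + (z j : ℚ)) - ev (u (fun e => x e + 1 * zr e))) else 0) =
    ∑ i, if K x then
      (ev (fun j => if en j < en i then u (fun e => x e + 1 * zr e) j else u x j + (z j : ℚ))
      - ev (fun j => if en j ≤ en i then u (fun e => x e + 1 * zr e) j else u x j + (z j : ℚ)))
      else 0 := by
    intro x
    split_ifs
    · exact telescope en ev _ _
    · simp
  rw [Finset.sum_congr rfl fun x _ => e2 x]
  rw [Finset.sum_comm]
  refine Finset.sum_congr rfl fun i _ => ?_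
  have hnj : ∀ x : E → ZMod r, (z i ≠ 0 → x i ≠ (kap z c i : ZMod r)) →
      u (fun e => x e + 1 * zr e) i = u x i + z i := by
    intro x hx
    simp only [u, zr, one_mul]
    rw [rep_jump r (c i) (z i) (h1 i) (x i) hx]
    push_cast; ring
  have hnj2 : ∀ x : E → ZMod r, (z i ≠ 0 → x i ≠ (kap z c i : ZMod r)) →
      (ev (fun j => if en j < en i then u (fun e => x e + 1 * zr e) j else u x j + (z j : ℚ))
      - ev (fun j => if en j ≤ en i then u (fun e => x e + 1 * zr e) j else u x j + (z j : ℚ)))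
      = 0 := by
    intro x hx
    rw [sub_eq_zero]
    congr 1
    funext j
    by_cases hj : j = i
    · subst hj; rw [if_neg (lt_irrefl _), if_pos le_rfl, hnj x hx]
    · have : en j ≠ en i := fun h => hj (en.injective h)
      simp only [le_iff_lt_or_eq, this, or_false]
  by_cases hi : z i = 0
  · rw [if_pos hi]
    refine Finset.sum_eq_zero fun x _ => ?_
    rw [hnj2 x (fun h => absurd hi h)]; simp
  rw [if_neg hi]
  have hzz : z i * z i = 1 := by rcases h1 i with h | h | h <;> simp_all
  rw [← hshift (kk z c i : ZMod r)]
  unfold F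
  rw [Finset.mul_sum]
  refine Finset.sum_congr rfl fun x _ => ?_
  simp only [hKadd]
  have hxi : x i + (kk z c i : ZMod r) * zr i = x i + (kap z c i : ZMod r) := by
    simp only [kk, zr]
    rw [← Int.cast_mul, mul_right_comm, hzz, one_mul]
  have hcond : ((∀ v, bd ends x v = 0) ∧ (∀ e, e ∉ S.erase i → x e = 0)) ↔ (K x ∧ x i = 0) := by
    simp only [K, and_assoc]
    refine and_congr_right fun _ => ⟨fun h => ⟨fun e he => h e (by simp [he]), h i (by simp)⟩, ?_⟩
    rintro ⟨ha, hb⟩ e he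
    by_cases hei : e = i
    · rw [hei, hb]
    · exact ha e (by simpa [hei] using he)
  rw [if_congr hcond rfl rfl]
  by_cases hx0 : x i = 0
  swap
  · have hfalse : ¬ (K x ∧ x i = 0) := fun h => hx0 h.2
    rw [hnj2, if_neg hfalse]
    · rw [ite_self, mul_zero]
    · intro _
      rw [hxi]
      intro h
      exact hx0 (by simpa using h)
  by_cases hK : K x
  swap
  · simp [hK]
  rw [if_pos hK, if_pos ⟨hK, hx0⟩]
  -- now the core identity
  have hpe := congrArg (MvPolynomial.eval (vv r (fun e => ((rep r (cc en z c i e) (x e) : ℤ) : ℚ))))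
    (hP' i)
  rw [map_mul, map_sub, eval_sb, eval_sb] at hpe
  have hnone : MvPolynomial.eval (vv r (fun e => ((rep r (cc en z c i e) (x e) : ℤ) : ℚ)))
      (MvPolynomial.X none) = (r : ℚ) := by simp [vv]
  rw [hnone, map_zero] at hpe
  rw [mul_assoc, ← hpe]
  have hA : ∀ j, en j < en i → u (fun e => x e + (kk z c i : ZMod r) * zr e + 1 * zr e) j
      = ((rep r (cc en z c i j) (x j) : ℤ) : ℚ) + (((kk z c i + 1) * z j : ℤ) : ℚ) := by
    intro j hj
    simp only [u, zr]
    have : x j + (kk z c i : ZMod r) * (z j : ZMod r) + 1 * (z j : ZMod r)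
        = x j + (((kk z c i + 1) * z j : ℤ) : ZMod r) := by push_cast; ring
    rw [this, rep_add]
    simp [cc, hj]
  have hB : ∀ j, ¬ en j < en i → u (fun e => x e + (kk z c i : ZMod r) * zr e) j + (z j : ℚ)
      = ((rep r (cc en z c i j) (x j) : ℤ) : ℚ) + (((kk z c i + 1) * z j : ℤ) : ℚ) := by
    intro j hj
    simp only [u, zr]
    have : x j + (kk z c i : ZMod r) * (z j : ZMod r)
        = x j + (((kk z c i) * z j : ℤ) : ZMod r) := by push_cast; ring
    rw [this, rep_add]
    simp [cc, hj]
    ring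
  have hne : ∀ j, j ≠ i → en j ≠ en i := fun j hj h => hj (en.injective h)
  have hfun1 : (fun j => if en j < en i then
        u (fun e => x e + (kk z c i : ZMod r) * zr e + 1 * zr e) j
      else u (fun e => x e + (kk z c i : ZMod r) * zr e) j + (z j : ℚ))
      = fun j => if j = i then u (fun e => x e + (kk z c i : ZMod r) * zr e) i + (z i : ℚ)
        else ((rep r (cc en z c i j) (x j) : ℤ) : ℚ) + (((kk z c i + 1) * z j : ℤ) : ℚ) := by
    funext j
    by_cases hj : j = i
    · subst hj; simp
    · rw [if_neg hj]
      split_ifs with h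
      · exact hA j h
      · exact hB j h
  have hfun2 : (fun j => if en j ≤ en i then
        u (fun e => x e + (kk z c i : ZMod r) * zr e + 1 * zr e) j
      else u (fun e => x e + (kk z c i : ZMod r) * zr e) j + (z j : ℚ))
      = fun j => if j = i then u (fun e => x e + (kk z c i : ZMod r) * zr e + 1 * zr e) i
        else ((rep r (cc en z c i j) (x j) : ℤ) : ℚ) + (((kk z c i + 1) * z j : ℤ) : ℚ) := by
    funext j
    by_cases hj : j = i
    · subst hj; simp
    · rw [if_neg hj]
      simp only [le_iff_lt_or_eq, hne j hj, or_false]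
      split_ifs with h
      · exact hA j h
      · exact hB j h
  rw [hfun1, hfun2]
  have hu : u (fun e => x e + (kk z c i : ZMod r) * zr e) i = ((rep r (c i) (kap z c i : ZMod r) : ℤ) : ℚ) := by
    simp only [u]; rw [hxi, hx0, zero_add]
  have hu' : u (fun e => x e + (kk z c i : ZMod r) * zr e + 1 * zr e) i
      = ((rep r (c i) ((kap z c i + z i : ℤ) : ZMod r) : ℤ) : ℚ) := by
    simp only [u]; rw [hxi, hx0, zero_add]; simp [zr]
  rw [hu, hu']
  rcases h1 i with h | h | h
  · have ha : alp z c i = c i := by simp [alp, h]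
    have hk : kap z c i = c i - 1 := by simp [kap, h]
    rw [ha, hk, rep_at_top, h, sub_add_cancel, rep_at]
    have t1 : (((c i - 1 + r : ℤ) : ℚ) + ((1 : ℤ) : ℚ)) = (c i : ℚ) + r := by push_cast; ring
    rw [t1, add_zero]; simp only [ev]; simp
  · have ha : alp z c i = c i - 1 := by simp [alp, h]
    have hk : kap z c i = c i := by simp [kap, h]
    rw [ha, hk, rep_at, h, ← sub_eq_add_neg (c i) 1, rep_at_top]
    have t1 : ((c i : ℚ) + ((-1 : ℤ) : ℚ)) = ((c i - 1 : ℤ) : ℚ) + 0 := by push_cast; ring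
    have t2 : ((c i - 1 + r : ℤ) : ℚ) = ((c i - 1 : ℤ) : ℚ) + r := by push_cast; ring
    rw [t1, t2]; simp only [ev]
    generalize MvPolynomial.eval _ Q = A
    generalize MvPolynomial.eval _ Q = B
    push_cast; ring
  · exact absurd h hi

lemma main_ind [Nonempty V] (ends : E → V × V) (m : ℕ) : ∀ (S : Finset E), S.card = m →
    ∀ (c : E → ℤ) (P : MvPolynomial (Option E) ℚ),
    ∃ (p : Polynomial ℚ) (R0 : ℕ), Polynomial.X ^ (S.card + 1 - Fintype.card V) ∣ p ∧
      ∀ (r : ℕ) [NeZero r], R0 ≤ r → F ends r S c P = p.eval (r : ℚ) := by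
  induction m using Nat.strong_induction_on with
  | _ m ih =>
  intro S hS c P
  by_cases hc : HasCyc ends S
  · obtain ⟨z, h1, h2, h3, i0, hi0⟩ := hc
    obtain ⟨Q, hQ⟩ := exists_antidiff z i0 hi0 P
    choose P' hP' using fun i => sb_dvd z i (kk z c i) (alp z c i) Q
    let en := Fintype.equivFin E
    have hstep := fun (r : ℕ) (_ : NeZero r) =>
      step ends en r S c z h1 h2 h3 P Q hQ P' hP'
    have hex : ∀ i, ∃ (p : Polynomial ℚ) (R0 : ℕ),
        Polynomial.X ^ (S.card + 1 - Fintype.card V) ∣ p ∧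
        ∀ (r : ℕ) [NeZero r], R0 ≤ r → (if z i = 0 then 0 else
      (z i : ℚ) * r * F ends r (S.erase i) (cc en z c i) (P' i)) = p.eval (r : ℚ) := by
      intro i
      by_cases hi : z i = 0
      · exact ⟨0, 0, dvd_zero _, by simp [hi]⟩
      have hcard := Finset.card_erase_of_mem (h2 i hi)
      have hpos := Finset.card_pos.2 ⟨i, h2 i hi⟩
      obtain ⟨p, R0, hp, hpr⟩ := ih (S.erase i).card (by omega) (S.erase i) rfl
        (cc en z c i) (P' i)
      refine ⟨Polynomial.C (z i : ℚ) * (Polynomial.X * p), R0, ?_, ?_⟩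
      · apply Dvd.dvd.mul_left
        refine (pow_dvd_pow _ ?_).trans ((pow_succ' (Polynomial.X : Polynomial ℚ) _).dvd.trans
          (mul_dvd_mul_left _ hp))
        omega
      · intro r _ hr
        rw [if_neg hi, hpr r hr]; simp; ring
    choose p R0 hp hpr using hex
    refine ⟨∑ i, p i, ∑ i, R0 i, Finset.dvd_sum fun i _ => hp i, ?_⟩
    intro r _ hr
    rw [hstep r inferInstance, Polynomial.eval_finsetSum]
    refine Finset.sum_congr rfl fun i _ => hpr i r ?_
    exact (Finset.single_le_sum (fun _ _ => Nat.zero_le _) (Finset.mem_univ i)).trans hr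
  · have hcard := forest_card ends S hc
    refine ⟨MvPolynomial.aeval (fun o => o.elim Polynomial.X
      (fun e => if c e ≤ 0 then 0 else Polynomial.X)) P, ∑ e, (c e).natAbs + 1, ?_, ?_⟩
    · rw [Nat.sub_eq_zero_of_le hcard]; simp
    · intro r _ hr
      unfold F
      rw [Finset.sum_eq_single 0]
      · rw [if_pos]
        · have hev : ∀ (f : Option E → Polynomial ℚ) (t : ℚ),
              (MvPolynomial.aeval f P).eval t = MvPolynomial.eval (fun o => (f o).eval t) P := by
            intro f t
            induction P using MvPolynomial.induction_on with
            | C a => simp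
            | add p q hp hq => simp [hp, hq]
            | mul_X p o hp => simp [hp]
          rw [hev]
          congr 2
          funext o
          cases o with
          | none => simp [vv]
          | some e =>
            have : (c e).natAbs < r := by
              have := Finset.single_le_sum (f := fun e => (c e).natAbs)
                (fun _ _ => Nat.zero_le _) (Finset.mem_univ e)
              omega
            simp only [vv, Option.elim_some, Pi.zero_apply]
            rw [rep_zero r (c e) this]
            split_ifs <;> simp
        · simp [bd]
      · intro x _ hx
        rw [if_neg]
        rintro ⟨ha, hb⟩
        exact hx (funext fun e => forest_zero ends S hc x ha hb e)
      · simp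

/-- half edge values -/
def hv {r : ℕ} (x : E → ZMod r) : E × Bool → ℚ :=
  fun h => if h.2 then ((-(x h.1)).val : ℚ) else ((x h.1).val : ℚ)

lemma rep_zero_eq (r : ℕ) (y : ZMod r) : rep r 0 y = (y.val : ℤ) := by simp [rep]

lemma rep_one_eq (r : ℕ) [NeZero r] (y : ZMod r) : rep r 1 y = (r : ℤ) - ((-y).val : ℤ) := by
  have := ZMod.val_lt (-y)
  apply rep_unique
  · omega
  · omega
  · simp

lemma mono_eq (r : ℕ) [NeZero r] (y : ZMod r) (p q : ℕ) :
    ((-y).val : ℚ) ^ q * (y.val : ℚ) ^ p =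
      ((rep r (if p = 0 then 1 else 0) y : ℤ) : ℚ) ^ p *
        ((r : ℚ) - ((rep r (if p = 0 then 1 else 0) y : ℤ) : ℚ)) ^ q := by
  by_cases hp : p = 0
  · subst hp
    simp [rep_one_eq]
  · simp only [hp, if_false, rep_zero_eq]
    by_cases hy : y = 0
    · subst hy; simp [hp]
    · haveI : NeZero y := ⟨hy⟩
      rw [ZMod.val_neg_of_ne_zero, Nat.cast_sub (ZMod.val_lt y).le]
      push_cast; ring

/-- affine sum -/
def G (ends : E → V × V) (b : V → ℤ) (r : ℕ) [NeZero r] (W : MvPolynomial (E × Bool) ℚ) : ℚ :=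
  ∑ x : E → ZMod r, if (∀ v, bd ends x v + (b v : ZMod r) = 0) then
    MvPolynomial.eval (hv x) W else 0

lemma G_poly [Nonempty V] (ends : E → V × V) (b : V → ℤ) (w0 : E → ℤ)
    (hw0 : ∀ v, bd ends w0 v + b v = 0) (W : MvPolynomial (E × Bool) ℚ) :
    ∃ (p : Polynomial ℚ) (R0 : ℕ), Polynomial.X ^ (Fintype.card E + 1 - Fintype.card V) ∣ p ∧
      ∀ (r : ℕ) [NeZero r], R0 ≤ r → G ends b r W = p.eval (r : ℚ) := by
  induction W using MvPolynomial.induction_on' with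
  | add p q hp hq =>
    obtain ⟨p1, R1, h1, h1'⟩ := hp
    obtain ⟨p2, R2, h2, h2'⟩ := hq
    refine ⟨p1 + p2, R1 + R2, dvd_add h1 h2, ?_⟩
    intro r _ hr
    rw [Polynomial.eval_add, ← h1' r (by omega), ← h2' r (by omega)]
    unfold G
    rw [← Finset.sum_add_distrib]
    refine Finset.sum_congr rfl fun x _ => ?_
    split_ifs <;> simp
  | monomial d t =>
    let c : E → ℤ := fun e => if d (e, false) = 0 then 1 else 0
    let Y : E → MvPolynomial (Option E) ℚ :=
      fun e => MvPolynomial.X (some e) + MvPolynomial.C (w0 e : ℚ)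
    let P : MvPolynomial (Option E) ℚ := MvPolynomial.C t *
      ∏ e, (Y e ^ d (e, false) * (MvPolynomial.X none - Y e) ^ d (e, true))
    obtain ⟨p, R0, hp, hpr⟩ := main_ind ends _ Finset.univ rfl (fun e => c e - w0 e) P
    refine ⟨p, R0, by simpa using hp, ?_⟩
    intro r _ hr
    rw [← hpr r hr]
    unfold G F
    rw [← Equiv.sum_comp (Equiv.addRight (fun e => (w0 e : ZMod r)))]
    refine Finset.sum_congr rfl fun x _ => ?_
    refine if_congr ?_ ?_ rfl
    · simp only [Finset.mem_univ, not_true_eq_false, false_imp_iff, implies_true, and_true]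
      refine forall_congr' fun v => ?_
      have : bd ends ((Equiv.addRight (fun e => (w0 e : ZMod r))) x) v
        = bd ends x v + ((bd ends w0 v : ℤ) : ZMod r) := by
        rw [← bd_cast, ← bd_add]; rfl
      rw [this, add_assoc, ← Int.cast_add, hw0]; simp
    · rw [MvPolynomial.eval_monomial, Finsupp.prod_fintype _ _ (by simp),
        Fintype.prod_prod_type]
      simp only [P, map_mul, map_prod, MvPolynomial.eval_C, map_pow, map_sub]
      congr 1
      refine Finset.prod_congr rfl fun e _ => ?_
      rw [Fintype.prod_bool]
      have hy : MvPolynomial.eval (vv r fun e => ((rep r (c e - w0 e) (x e) : ℤ) : ℚ)) (Y e)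
          = ((rep r (c e) (x e + (w0 e : ZMod r)) : ℤ) : ℚ) := by
        rw [rep_add]; simp [Y, vv]
      rw [hy]
      have := mono_eq r (x e + (w0 e : ZMod r)) (d (e, false)) (d (e, true))
      simpa [hv, vv, c] using this

end

end Pix

open scoped Classical in
theorem pixton_polynomiality {V E ι : Type} [Fintype V] [Fintype E] [Fintype ι]
    (ends : E → V × V)
    (hconn : (SimpleGraph.fromRel (fun u v => ∃ e, ends e = (u, v))).Connected)
    (leg : ι → V) (a : ι → ℤ) (W : MvPolynomial (E × Bool) ℚ) :
    ∃ (P : Polynomial ℚ) (R0 : ℕ),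
      Polynomial.X ^ (Fintype.card E + 1 - Fintype.card V) ∣ P ∧
      ∀ r : ℕ, R0 ≤ r →
        (∑ w : E × Bool → Fin r,
          if ((∀ e : E, (((w (e, false)).val : ZMod r) + ((w (e, true)).val : ZMod r) = 0)) ∧
              (∀ v : V,
                (∑ e : E, ((if (ends e).1 = v then ((w (e, false)).val : ZMod r) else 0)
                    + (if (ends e).2 = v then ((w (e, true)).val : ZMod r) else 0)))
                  + ∑ i : ι, (if leg i = v then (a i : ZMod r) else 0) = 0))
          then MvPolynomial.eval (fun h => ((w h).val : ℚ)) W else 0)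
        = P.eval (r : ℚ) := by
  have hne : Nonempty V := hconn.nonempty
  let b : V → ℤ := fun v => ∑ i : ι, (if leg i = v then a i else 0)
  have hbr : ∀ (r : ℕ) v, (∑ i : ι, (if leg i = v then (a i : ZMod r) else 0))
      = (b v : ZMod r) := by
    intro r v
    simp only [b]; push_cast
    refine Finset.sum_congr rfl fun i _ => ?_
    split_ifs <;> simp
  have hG : ∀ (r : ℕ) [NeZero r], (∑ w : E × Bool → Fin r,
          if ((∀ e : E, (((w (e, false)).val : ZMod r) + ((w (e, true)).val : ZMod r) = 0)) ∧
              (∀ v : V,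
                (∑ e : E, ((if (ends e).1 = v then ((w (e, false)).val : ZMod r) else 0)
                    + (if (ends e).2 = v then ((w (e, true)).val : ZMod r) else 0)))
                  + ∑ i : ι, (if leg i = v then (a i : ZMod r) else 0) = 0))
          then MvPolynomial.eval (fun h => ((w h).val : ℚ)) W else 0) = Pix.G ends b r W := by
    intro r _
    unfold Pix.G
    rw [← Finset.sum_filter, ← Finset.sum_filter]
    have hfin : ∀ (t : Fin r), ((t.val : ZMod r)).val = t.val :=
      fun t => ZMod.val_natCast_of_lt t.isLt
    have hbd : ∀ (x y : E → ZMod r) v, (∀ e, x e + y e = 0) →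
        (∑ e : E, ((if (ends e).1 = v then x e else 0) + (if (ends e).2 = v then y e else 0)))
          = Pix.bd ends x v := by
      intro x y v h
      unfold Pix.bd
      refine Finset.sum_congr rfl fun e _ => ?_
      rw [eq_neg_of_add_eq_zero_right (h e)]
      split_ifs <;> ring
    refine Finset.sum_bij' (fun w _ e => ((w (e, false)).val : ZMod r))
      (fun x _ h => if h.2 then ⟨(-(x h.1)).val, ZMod.val_lt _⟩ else ⟨(x h.1).val, ZMod.val_lt _⟩)
      ?_ ?_ ?_ ?_ ?_
    · intro w hw
      simp only [Finset.mem_filter, Finset.mem_univ, true_and] at hw ⊢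
      intro v
      have := hw.2 v
      rw [hbr, hbd _ _ v hw.1] at this
      exact this
    · intro x hx
      simp only [Finset.mem_filter, Finset.mem_univ, true_and] at hx ⊢
      have h0 : ∀ e, x e + -(x e) = 0 := fun e => add_neg_cancel _
      simp only [Bool.false_eq_true, if_false, if_true, ZMod.natCast_zmod_val]
      refine ⟨h0, fun v => ?_⟩
      rw [hbr, hbd _ _ v h0]
      exact hx v
    · intro w hw
      simp only [Finset.mem_filter, Finset.mem_univ, true_and] at hw
      funext ⟨e, bb⟩
      cases bb
      · simp [hfin]
      · apply Fin.ext
        simp only [if_true]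
        rw [← eq_neg_of_add_eq_zero_right (hw.1 e), hfin]
    · intro x hx
      funext e
      simp
    · intro w hw
      simp only [Finset.mem_filter, Finset.mem_univ, true_and] at hw
      congr 2
      funext ⟨e, bb⟩
      cases bb
      · simp [Pix.hv, hfin]
      · simp only [Pix.hv, if_true]
        rw [← eq_neg_of_add_eq_zero_right (hw.1 e), hfin]
  by_cases hs : ∑ v, b v = 0
  · have hw0 : ∃ w0 : E → ℤ, ∀ v, Pix.bd ends w0 v + b v = 0 := by
      obtain ⟨v0⟩ := hne
      have hch : ∀ v, ∃ z : E → ℤ, ∀ x, Pix.bd ends z x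
          = (if v0 = x then 1 else 0) - (if v = x then 1 else 0) := by
        intro v
        have hr : (Pix.gr ends Set.univ).Reachable v0 v := by
          have := hconn.preconnected v0 v
          simpa [Pix.gr] using this
        obtain ⟨z, _, _, h⟩ := Pix.reach_chain ends Set.univ hr
        exact ⟨z, h⟩
      choose z hz using hch
      have hsum : ∀ (T : Finset V) x, Pix.bd ends (fun e => ∑ v ∈ T, b v * z v e) x
          = ∑ v ∈ T, b v * Pix.bd ends (z v) x := by
        intro T x
        induction T using Finset.induction_on with
        | empty => simp [Pix.bd]
        | insert v T hv ih =>
          simp only [Finset.sum_insert hv]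
          rw [Pix.bd_add, Pix.bd_smul, ih]
      refine ⟨fun e => ∑ v, b v * z v e, fun x => ?_⟩
      rw [hsum]
      simp only [hz, mul_sub, Finset.sum_sub_distrib, ← Finset.sum_mul, hs]
      simp
    obtain ⟨w0, hw0⟩ := hw0
    obtain ⟨p, R0, hp, hpr⟩ := Pix.G_poly ends b w0 hw0 W
    refine ⟨p, R0 + 1, hp, fun r hr => ?_⟩
    haveI : NeZero r := ⟨by omega⟩
    rw [hG r, hpr r (by omega)]
  · refine ⟨0, (∑ v, b v).natAbs + 1, dvd_zero _, fun r hr => ?_⟩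
    haveI : NeZero r := ⟨by omega⟩
    rw [hG r]
    unfold Pix.G
    rw [Polynomial.eval_zero]
    refine Finset.sum_eq_zero fun x _ => if_neg fun h => hs ?_
    have h1 : ∑ v, (Pix.bd ends x v + (b v : ZMod r)) = 0 := Finset.sum_eq_zero fun v _ => h v
    have h2 := Pix.sum_bd_mul ends x (fun _ => 1)
    simp only [one_mul, sub_self, zero_mul, Finset.sum_const_zero] at h2
    rw [Finset.sum_add_distrib, h2, zero_add, ← Int.cast_sum,
      ZMod.intCast_zmod_eq_zero_iff_dvd] at h1
    exact Int.eq_zero_of_abs_lt_dvd h1 (by rw [Int.abs_eq_natAbs]; omega)
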